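/- Let 𝒜 be an essentially small additive category with a weakly exact structure 𝒲, and let Mod 𝒜 denote the abelian category of additive functors 𝒜ᵒᵖ ⥤ Ab. A functor F ∈ Mod 𝒜 is isomorphic to the contravariant defect of some pair in 𝒲 if and only if F is both weakly effaceable with respect to 𝒲 and coherent. Moreover, the category of defects of 𝒲 is topologizing in the category of coherent right 𝒜-modules: it is closed under finite direct sums and under subquotients taken among coherent functors. -/

import Mathlib

open CategoryTheory CategoryTheory.Limits ZeroObject

universe w v u

namespace WeaklyExactPaper

section Preamble

variable {C : Type u} [Category.{v} C] [Preadditive C] [HasZeroObject C] [HasBinaryBiproducts C]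

/-- `(i, d)` is a kernel–cokernel pair: `i` is a kernel of `d` and `d` is a cokernel of `i`. -/
structure IsKernelCokernelPair {A B Z : C} (i : A ⟶ B) (d : B ⟶ Z) : Prop where
  w : i ≫ d = 0
  isKernel : Nonempty (IsLimit (KernelFork.ofι i w))
  isCokernel : Nonempty (IsColimit (CokernelCofork.ofπ d w))

/-- Isomorphism of composable pairs `(i, d) ≅ (i', d')`. -/
def PairIso {A B Z A' B' Z' : C} (i : A ⟶ B) (d : B ⟶ Z) (i' : A' ⟶ B') (d' : B' ⟶ Z') : Prop :=
  ∃ (eA : A ≅ A') (eB : B ≅ B') (eZ : Z ≅ Z'),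
    i ≫ eB.hom = eA.hom ≫ i' ∧ d ≫ eZ.hom = eB.hom ≫ d'

/-- `f` is a kernel of some morphism. -/
def IsSomeKernel {A B : C} (f : A ⟶ B) : Prop :=
  ∃ (Z : C) (g : B ⟶ Z) (w : f ≫ g = 0), Nonempty (IsLimit (KernelFork.ofι f w))

/-- `g` is a cokernel of some morphism. -/
def IsSomeCokernel {B Z : C} (g : B ⟶ Z) : Prop :=
  ∃ (A : C) (f : A ⟶ B) (w : f ≫ g = 0), Nonempty (IsColimit (CokernelCofork.ofπ g w))

/-- `f` admits a cokernel. -/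
def AdmitsCokernel {A B : C} (f : A ⟶ B) : Prop :=
  ∃ (Z : C) (g : B ⟶ Z) (w : f ≫ g = 0), Nonempty (IsColimit (CokernelCofork.ofπ g w))

/-- `g` admits a kernel. -/
def AdmitsKernel {B Z : C} (g : B ⟶ Z) : Prop :=
  ∃ (A : C) (f : A ⟶ B) (w : f ≫ g = 0), Nonempty (IsLimit (KernelFork.ofι f w))

/-- A weakly exact structure on an additive category: a class of kernel–cokernel pairs,
closed under isomorphisms of composable pairs and binary direct sums, containing the pairs
`(1_X, X ⟶ 0)` and `(0 ⟶ X, 1_X)`, and satisfying the pushout axiom (E2) and the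
pullback axiom (E2)ᵒᵖ. -/
structure WeaklyExactStructure (C : Type u) [Category.{v} C] [Preadditive C]
    [HasZeroObject C] [HasBinaryBiproducts C] where
  W : ∀ ⦃A B Z : C⦄, (A ⟶ B) → (B ⟶ Z) → Prop
  kc_of_mem : ∀ {A B Z : C} {i : A ⟶ B} {d : B ⟶ Z}, W i d → IsKernelCokernelPair i d
  iso_closed : ∀ {A B Z A' B' Z' : C} {i : A ⟶ B} {d : B ⟶ Z} {i' : A' ⟶ B'} {d' : B' ⟶ Z'},
    W i d → PairIso i d i' d' → W i' d'
  sum_mem : ∀ {A₁ B₁ Z₁ A₂ B₂ Z₂ : C} {i₁ : A₁ ⟶ B₁} {d₁ : B₁ ⟶ Z₁} {i₂ : A₂ ⟶ B₂}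
    {d₂ : B₂ ⟶ Z₂}, W i₁ d₁ → W i₂ d₂ → W (biprod.map i₁ i₂) (biprod.map d₁ d₂)
  id_zero_mem : ∀ X : C, W (𝟙 X) (0 : X ⟶ (0 : C))
  zero_id_mem : ∀ X : C, W (0 : (0 : C) ⟶ X) (𝟙 X)
  pushout_mem : ∀ {A B Z A' : C} {i : A ⟶ B} {d : B ⟶ Z}, W i d → ∀ t : A ⟶ A',
    ∃ (S : C) (g : B ⟶ S) (i' : A' ⟶ S), IsPushout i t g i' ∧ ∃ (Z' : C) (d' : S ⟶ Z'), W i' d'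
  pullback_mem : ∀ {A B Z D : C} {i : A ⟶ B} {d : B ⟶ Z}, W i d → ∀ t : D ⟶ Z,
    ∃ (P : C) (p : P ⟶ B) (q : P ⟶ D), IsPullback p q d t ∧ ∃ (A'' : C) (i'' : A'' ⟶ P), W i'' q

/-- `i` is an admissible monic of `𝒲`. -/
def AdmissibleMonic (𝒲 : WeaklyExactStructure C) {A B : C} (i : A ⟶ B) : Prop :=
  ∃ (Z : C) (d : B ⟶ Z), 𝒲.W i d

/-- `d` is an admissible epic of `𝒲`. -/
def AdmissibleEpic (𝒲 : WeaklyExactStructure C) {B Z : C} (d : B ⟶ Z) : Prop :=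
  ∃ (A : C) (i : A ⟶ B), 𝒲.W i d

/-- `(i, d)` is a split kernel–cokernel pair. -/
def IsSplitPair {A B Z : C} (i : A ⟶ B) (d : B ⟶ Z) : Prop :=
  ∃ (X Y : C), PairIso (biprod.inl : X ⟶ X ⊞ Y) (biprod.snd : X ⊞ Y ⟶ Y) i d

end Preamble

section Statement

variable {C : Type u} [SmallCategory C] [Preadditive C] [HasZeroObject C] [HasBinaryBiproducts C]

/-- `F` is weakly effaceable with respect to `𝒲`. -/
def WeaklyEffaceable (𝒲 : WeaklyExactStructure C) (F : Cᵒᵖ ⥤ AddCommGrpCat.{u}) : Prop :=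
  ∀ (Z : C) (z : F.obj (Opposite.op Z)), ∃ (Y : C) (g : Y ⟶ Z),
    AdmissibleEpic 𝒲 g ∧ F.map g.op z = 0

/-- `F` is (isomorphic to) the contravariant defect of a pair of `𝒲`. -/
def IsDefect (𝒲 : WeaklyExactStructure C) (F : Cᵒᵖ ⥤ AddCommGrpCat.{u}) : Prop :=
  ∃ (A B Z : C) (i : A ⟶ B) (d : B ⟶ Z), 𝒲.W i d ∧
    Nonempty (F ≅ cokernel (preadditiveYoneda.map d))

/-- `F` is finitely generated: it admits an epimorphism from a representable functor. -/
def FinitelyGenerated (F : Cᵒᵖ ⥤ AddCommGrpCat.{u}) : Prop :=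
  ∃ (X : C) (π : preadditiveYoneda.obj X ⟶ F), Epi π

/-- `F` is finitely presented: it is a cokernel of a morphism of representable functors. -/
def FinitelyPresented (F : Cᵒᵖ ⥤ AddCommGrpCat.{u}) : Prop :=
  ∃ (X Y : C) (f : preadditiveYoneda.obj X ⟶ preadditiveYoneda.obj Y),
    Nonempty (F ≅ cokernel f)

/-- `F` is coherent: finitely presented, and every finitely generated subfunctor is finitely
presented. -/
def Coherent (F : Cᵒᵖ ⥤ AddCommGrpCat.{u}) : Prop :=
  FinitelyPresented F ∧
    ∀ (G : Cᵒᵖ ⥤ AddCommGrpCat.{u}) (φ : G ⟶ F), Mono φ → FinitelyGenerated G →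
      FinitelyPresented G

/-!
Let `F` be presented by `Hom(-, d) : Hom(-, B) ⟶ Hom(-, Z)`. If `d` is an admissible epic, an
element of `F(T)` lifts to some `t : T ⟶ Z` and is killed by the pullback of `d` along `t`, so
`F` is weakly effaceable; a subfunctor generated by `Hom(-, X)` is likewise presented by the
pullback of `d` along a lift `X ⟶ Z`, so it is again a defect and `F` is coherent.

Conversely, if `F` is weakly effaceable, its generator in `F(Z)` is killed by an admissible epic
`g : Y ⟶ Z`. Then `g` factors through `d`, so `[g d] : Y ⊞ B ⟶ Z` still presents `F`. It is an
admissible epic: with `P` the pullback of `g` and `-d`, the inclusion `P ⟶ Y ⊞ B` is the pushout of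
the kernel `K ⟶ Y` of `g` along `K ⟶ P`, hence an admissible monic, and its cokernel is `[g d]`.
Closure under quotients follows, as these inherit weak effaceability.
-/

section ZeroMorphisms

variable {D : Type*} [Category* D] [HasZeroMorphisms D]

lemma nonempty_isColimit_cokernelCofork_of_isPushout {A B Z A' S : D} {i : A ⟶ B} {d : B ⟶ Z}
    {t : A ⟶ A'} {b : B ⟶ S} {i' : A' ⟶ S} {d' : S ⟶ Z} (sq : IsPushout i t b i')
    (w : i ≫ d = 0) (hd : IsColimit (CokernelCofork.ofπ d w)) (hbd : b ≫ d' = d)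
    (w' : i' ≫ d' = 0) : Nonempty (IsColimit (CokernelCofork.ofπ d' w')) := by
  have : Epi d := Cofork.IsColimit.epi hd
  have : Epi d' := epi_of_epi_fac hbd
  refine ⟨CokernelCofork.IsColimit.ofπ' d' w' fun c hc => ?_⟩
  obtain ⟨β, hβ⟩ := CokernelCofork.IsColimit.desc' hd (b ≫ c) (by
    rw [sq.w_assoc, hc, comp_zero])
  refine ⟨β, sq.hom_ext ?_ ?_⟩
  · rw [reassoc_of% hbd]
    exact hβ
  · rw [reassoc_of% w', hc, zero_comp]

lemma nonempty_isLimit_kernelFork_of_isPullback {A B Z Z' P : D} {i : A ⟶ B} {d : B ⟶ Z}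
    {t : Z' ⟶ Z} {p : P ⟶ B} {d' : P ⟶ Z'} {i' : A ⟶ P} (sq : IsPullback p d' d t)
    (w : i ≫ d = 0) (hi : IsLimit (KernelFork.ofι i w)) (hip : i' ≫ p = i)
    (w' : i' ≫ d' = 0) : Nonempty (IsLimit (KernelFork.ofι i' w')) := by
  have : Mono i := Fork.IsLimit.mono hi
  have : Mono i' := mono_of_mono_fac hip
  refine ⟨KernelFork.IsLimit.ofι' i' w' fun k hk => ?_⟩
  obtain ⟨m, hm⟩ := KernelFork.IsLimit.lift' hi (k ≫ p) (by
    rw [Category.assoc, sq.w, reassoc_of% hk, zero_comp])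
  refine ⟨m, sq.hom_ext ?_ ?_⟩
  · rw [Category.assoc, hip]
    exact hm
  · rw [Category.assoc, w', hk, comp_zero]

variable [HasBinaryBiproducts D]

lemma nonempty_isColimit_cokernelCofork_biprod_map {B₁ Z₁ F₁ B₂ Z₂ F₂ : D} {d₁ : B₁ ⟶ Z₁}
    {d₂ : B₂ ⟶ Z₂} {π₁ : Z₁ ⟶ F₁} {π₂ : Z₂ ⟶ F₂} {w₁ : d₁ ≫ π₁ = 0} {w₂ : d₂ ≫ π₂ = 0}
    (h₁ : IsColimit (CokernelCofork.ofπ π₁ w₁)) (h₂ : IsColimit (CokernelCofork.ofπ π₂ w₂))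
    (w : biprod.map d₁ d₂ ≫ biprod.map π₁ π₂ = 0) :
    Nonempty (IsColimit (CokernelCofork.ofπ (biprod.map π₁ π₂) w)) := by
  have : Epi π₁ := Cofork.IsColimit.epi h₁
  have : Epi π₂ := Cofork.IsColimit.epi h₂
  refine ⟨CokernelCofork.IsColimit.ofπ' _ w fun k hk => ?_⟩
  obtain ⟨k₁, hk₁⟩ := CokernelCofork.IsColimit.desc' h₁ (biprod.inl ≫ k) (by
    rw [← biprod.inl_map_assoc, hk, comp_zero])
  obtain ⟨k₂, hk₂⟩ := CokernelCofork.IsColimit.desc' h₂ (biprod.inr ≫ k) (by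
    rw [← biprod.inr_map_assoc, hk, comp_zero])
  refine ⟨biprod.desc k₁ k₂, biprod.hom_ext' _ _ ?_ ?_⟩
  · rw [biprod.inl_map_assoc, biprod.inl_desc]
    exact hk₁
  · rw [biprod.inr_map_assoc, biprod.inr_desc]
    exact hk₂

lemma mapBiprod_hom_naturality {E : Type*} [Category* E] [HasZeroMorphisms E]
    [HasBinaryBiproducts E] (G : D ⥤ E) [G.PreservesZeroMorphisms] [PreservesBinaryBiproducts G]
    {X₁ X₂ Y₁ Y₂ : D} (f₁ : X₁ ⟶ Y₁) (f₂ : X₂ ⟶ Y₂) :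
    G.map (biprod.map f₁ f₂) ≫ (G.mapBiprod Y₁ Y₂).hom =
      (G.mapBiprod X₁ X₂).hom ≫ biprod.map (G.map f₁) (G.map f₂) := by
  apply biprod.hom_ext
  · simp only [Functor.mapBiprod_hom, Category.assoc, biprod.lift_fst, biprod.map_fst,
      biprod.lift_fst_assoc, ← Functor.map_comp]
  · simp only [Functor.mapBiprod_hom, Category.assoc, biprod.lift_snd, biprod.map_snd,
      biprod.lift_snd_assoc, ← Functor.map_comp]

end ZeroMorphisms

lemma isPushout_inl_lift {D : Type*} [Category* D] [Preadditive D] [HasBinaryBiproducts D]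
    {A B P Q : D} {l : A ⟶ P} {q : P ⟶ Q} (w : l ≫ q = 0)
    (hq : IsColimit (CokernelCofork.ofπ q w)) (p : P ⟶ B) :
    IsPushout (l ≫ p) l (biprod.inl : B ⟶ B ⊞ Q) (biprod.lift p q) := by
  have : Epi q := Cofork.IsColimit.epi hq
  let desc (s : PushoutCocone (l ≫ p) l) : { x : Q ⟶ s.pt // q ≫ x = s.inr - p ≫ s.inl } :=
    CokernelCofork.IsColimit.desc' hq (s.inr - p ≫ s.inl) (by
      rw [Preadditive.comp_sub, ← s.condition, Category.assoc, sub_self])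
  refine ⟨⟨by ext <;> simp [w]⟩, ⟨PushoutCocone.IsColimit.mk _
    (fun s => biprod.desc s.inl (desc s).1) (fun s => biprod.inl_desc _ _) (fun s => ?_)
    fun s m hl hr => ?_⟩⟩
  · rw [biprod.lift_desc, (desc s).2, add_sub_cancel]
  · refine biprod.hom_ext' _ _ (by rw [hl, biprod.inl_desc]) ?_
    rw [biprod.inr_desc, ← cancel_epi q, (desc s).2, ← hl, ← hr, biprod.lift_eq,
      Preadditive.add_comp, Category.assoc, Category.assoc, add_sub_cancel_left]

instance preservesBinaryBiproducts_of_additive {D E : Type*} [Category* D] [Category* E]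
    [Preadditive D] [Preadditive E] (G : D ⥤ E) [G.Additive] : PreservesBinaryBiproducts G :=
  preservesBinaryBiproducts_of_preservesBiproducts G

namespace WeaklyExactStructure

variable {D : Type*} [Category* D] [Preadditive D] [HasZeroObject D] [HasBinaryBiproducts D]
  (𝒲 : WeaklyExactStructure D)

lemma mem_of_isPushout {A B Z A' S : D} {i : A ⟶ B} {d : B ⟶ Z} {t : A ⟶ A'} {b : B ⟶ S}
    {i' : A' ⟶ S} {d' : S ⟶ Z} (h : 𝒲.W i d) (sq : IsPushout i t b i') (hbd : b ≫ d' = d)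
    (w' : i' ≫ d' = 0) : 𝒲.W i' d' := by
  obtain ⟨w, -, ⟨hd⟩⟩ := 𝒲.kc_of_mem h
  obtain ⟨hd'⟩ := nonempty_isColimit_cokernelCofork_of_isPushout sq w hd hbd w'
  obtain ⟨S₀, b₀, i₀, sq₀, Z₀, d₀, h₀⟩ := 𝒲.pushout_mem h t
  obtain ⟨w₀, -, ⟨hd₀⟩⟩ := 𝒲.kc_of_mem h₀
  let φ : Arrow.mk i₀ ≅ Arrow.mk i' :=
    Arrow.isoMk (Iso.refl _) (sq₀.isoIsPushout _ _ sq) (by simp)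
  exact 𝒲.iso_closed h₀ ⟨Iso.refl _, sq₀.isoIsPushout _ _ sq,
    CokernelCofork.mapIsoOfIsColimit hd₀ hd' φ, by simp,
    CokernelCofork.π_mapOfIsColimit hd₀ _ φ.hom⟩

lemma mem_of_isPullback {A B Z Z' P : D} {i : A ⟶ B} {d : B ⟶ Z} {t : Z' ⟶ Z} {p : P ⟶ B}
    {d' : P ⟶ Z'} {i' : A ⟶ P} (h : 𝒲.W i d) (sq : IsPullback p d' d t) (hip : i' ≫ p = i)
    (w' : i' ≫ d' = 0) : 𝒲.W i' d' := by
  obtain ⟨w, ⟨hi⟩, -⟩ := 𝒲.kc_of_mem h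
  obtain ⟨hi'⟩ := nonempty_isLimit_kernelFork_of_isPullback sq w hi hip w'
  obtain ⟨P₀, p₀, d₀, sq₀, A₀, i₀, h₀⟩ := 𝒲.pullback_mem h t
  obtain ⟨w₀, ⟨hi₀⟩, -⟩ := 𝒲.kc_of_mem h₀
  let φ : Arrow.mk d₀ ≅ Arrow.mk d' :=
    Arrow.isoMk (sq₀.isoIsPullback _ _ sq) (Iso.refl _) (by simp)
  exact 𝒲.iso_closed h₀ ⟨KernelFork.mapIsoOfIsLimit hi₀ hi' φ, sq₀.isoIsPullback _ _ sq,
    Iso.refl _, (KernelFork.mapOfIsLimit_ι (KernelFork.ofι i₀ w₀) hi' φ.hom).symm, by simp⟩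

lemma lift_desc_mem_of_isPullback {A B Z X P : D} {i : A ⟶ B} {g : B ⟶ Z} {f : X ⟶ Z}
    {p : P ⟶ B} {q : P ⟶ X} (h : 𝒲.W i g) (sq : IsPullback p q g f) :
    𝒲.W (biprod.lift p q) (biprod.desc g (-f)) := by
  have w : i ≫ g = 0 ≫ f := by rw [(𝒲.kc_of_mem h).w, zero_comp]
  have hip : sq.lift i 0 w ≫ p = i := sq.lift_fst _ _ _
  have hq : 𝒲.W (sq.lift i 0 w) q := 𝒲.mem_of_isPullback h sq hip (sq.lift_snd _ _ _)
  obtain ⟨wq, -, ⟨hcoker⟩⟩ := 𝒲.kc_of_mem hq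
  have po : IsPushout i (sq.lift i 0 w) biprod.inl (biprod.lift p q) := by
    simpa only [hip] using isPushout_inl_lift wq hcoker p
  refine 𝒲.mem_of_isPushout h po (biprod.inl_desc _ _) ?_
  rw [biprod.lift_desc, sq.w, Preadditive.comp_neg, add_neg_cancel]

end WeaklyExactStructure

lemma AdmissibleEpic.biprod_desc {D : Type*} [Category* D] [Preadditive D] [HasZeroObject D]
    [HasBinaryBiproducts D] {𝒲 : WeaklyExactStructure D} {B X Z : D} {g : B ⟶ Z}
    (hg : AdmissibleEpic 𝒲 g) (f : X ⟶ Z) : AdmissibleEpic 𝒲 (biprod.desc g f) := by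
  obtain ⟨A, i, h⟩ := hg
  obtain ⟨P, p, q, sq, -⟩ := 𝒲.pullback_mem h (-f)
  exact ⟨P, biprod.lift p q, by simpa only [neg_neg] using 𝒲.lift_desc_mem_of_isPullback h sq⟩

lemma shortComplex_exact_iff_forall_evaluation {J E : Type*} [Category* J] [Category* E]
    [Abelian E] (S : ShortComplex (J ⥤ E)) :
    S.Exact ↔ ∀ j, (S.map ((evaluation J E).obj j)).Exact := by
  refine ⟨fun h j => h.map _, fun h => ?_⟩
  rw [ShortComplex.exact_iff_isZero_homology]
  exact Functor.isZero _ fun j =>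
    ((ShortComplex.exact_iff_isZero_homology _).1 (h j)).of_iso
      (S.mapHomologyIso ((evaluation J E).obj j)).symm

section FunctorCategory

variable {J : Type*} [Category* J] {F G : J ⥤ AddCommGrpCat.{w}}

lemma app_surjective (φ : F ⟶ G) [Epi φ] (T : J) : Function.Surjective (φ.app T) :=
  (AddCommGrpCat.epi_iff_surjective _).1 inferInstance

lemma app_injective (φ : F ⟶ G) [Mono φ] (T : J) : Function.Injective (φ.app T) :=
  (AddCommGrpCat.mono_iff_injective _).1 inferInstance

end FunctorCategory

section Presentation

variable {D : Type u} [Category.{v} D] [Preadditive D] {F G : Dᵒᵖ ⥤ AddCommGrpCat.{v}}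

/-- `π` presents `F` by representables with relations `d`: the sequence
`Hom(-, B) ⟶ Hom(-, Z) ⟶ F ⟶ 0` is exact, stated by saying that `π` is a cokernel of `Hom(-, d)`.
If `d` is an admissible epic, this exhibits `F` as a defect. -/
def IsPresentation {B Z : D} (d : B ⟶ Z) (π : preadditiveYoneda.obj Z ⟶ F) : Prop :=
  ∃ w : preadditiveYoneda.map d ≫ π = 0, Nonempty (IsColimit (CokernelCofork.ofπ π w))

instance preadditiveYoneda_additive :
    (preadditiveYoneda : D ⥤ Dᵒᵖ ⥤ AddCommGrpCat.{v}).Additive where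
  map_add {X Y f g} := by
    ext T h
    exact Preadditive.comp_add _ _ _ h f g

lemma app_comp_eq_map_app {Z T S : D} (π : preadditiveYoneda.obj Z ⟶ F) (k : S ⟶ T) (h : T ⟶ Z) :
    π.app (Opposite.op S) (k ≫ h) = F.map k.op (π.app (Opposite.op T) h) :=
  NatTrans.naturality_apply π k.op h

lemma exists_preadditiveYoneda_map_comp_eq {X Z : D} (π : preadditiveYoneda.obj Z ⟶ F) [Epi π]
    (ψ : preadditiveYoneda.obj X ⟶ F) : ∃ t : X ⟶ Z, preadditiveYoneda.map t ≫ π = ψ := by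
  obtain ⟨t : X ⟶ Z, ht⟩ := app_surjective π _ (ψ.app (Opposite.op X) (𝟙 X))
  refine ⟨t, ?_⟩
  ext ⟨T⟩ (h : T ⟶ X)
  calc π.app (Opposite.op T) (h ≫ t)
      = F.map h.op (ψ.app (Opposite.op X) (𝟙 X)) := by rw [app_comp_eq_map_app, ht]
    _ = ψ.app (Opposite.op T) h := by rw [← app_comp_eq_map_app, Category.comp_id]

lemma isPresentation_iff {B Z : D} {d : B ⟶ Z} {π : preadditiveYoneda.obj Z ⟶ F} :
    IsPresentation d π ↔ Epi π ∧
      ∀ (T : D) (h : T ⟶ Z), π.app (Opposite.op T) h = 0 ↔ ∃ k : T ⟶ B, k ≫ d = h := by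
  have exact_iff (w : preadditiveYoneda.map d ≫ π = 0) : (ShortComplex.mk _ π w).Exact ↔
      ∀ (T : D) (h : T ⟶ Z), π.app (Opposite.op T) h = 0 → ∃ k : T ⟶ B, k ≫ d = h := by
    rw [shortComplex_exact_iff_forall_evaluation]
    refine Opposite.op_surjective.forall.trans (forall_congr' fun T => ?_)
    exact ShortComplex.ab_exact_iff _
  constructor
  · rintro ⟨w, hπ⟩
    obtain ⟨hexact, hepi⟩ := (ShortComplex.mk _ π w).exact_and_epi_g_iff_g_is_cokernel.2 hπ
    refine ⟨hepi, fun T h => ⟨(exact_iff w).1 hexact T h, ?_⟩⟩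
    rintro ⟨k, rfl⟩
    exact ConcreteCategory.congr_hom (NatTrans.congr_app w (Opposite.op T)) k
  · rintro ⟨hepi, hker⟩
    have w : preadditiveYoneda.map d ≫ π = 0 := by
      ext T k
      exact (hker T.unop _).2 ⟨k, rfl⟩
    exact ⟨w, (ShortComplex.mk _ π w).exact_and_epi_g_iff_g_is_cokernel.1
      ⟨(exact_iff w).2 fun T h => (hker T h).1, hepi⟩⟩

lemma exists_isPresentation_iff {B Z : D} {d : B ⟶ Z} :
    (∃ π : preadditiveYoneda.obj Z ⟶ F, IsPresentation d π) ↔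
      Nonempty (F ≅ cokernel (preadditiveYoneda.map d)) := by
  constructor
  · rintro ⟨π, w, ⟨hπ⟩⟩
    exact ⟨hπ.coconePointUniqueUpToIso (colimit.isColimit _)⟩
  · rintro ⟨e⟩
    exact ⟨cokernel.π _ ≫ e.inv, by simp,
      ⟨IsCokernel.cokernelIso _ _ (cokernelIsCokernel _) e.symm rfl⟩⟩

namespace IsPresentation

lemma of_mono {B Z P X : D} {d : B ⟶ Z} {π : preadditiveYoneda.obj Z ⟶ F}
    (hπ : IsPresentation d π) (φ : G ⟶ F) [Mono φ] (ρ : preadditiveYoneda.obj X ⟶ G) [Epi ρ]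
    {t : X ⟶ Z} (ht : preadditiveYoneda.map t ≫ π = ρ ≫ φ) {p : P ⟶ B} {q : P ⟶ X}
    (sq : IsPullback p q d t) : IsPresentation q ρ := by
  rw [isPresentation_iff] at hπ ⊢
  refine ⟨inferInstance, fun T h => ?_⟩
  have hφ : φ.app (Opposite.op T) (ρ.app (Opposite.op T) h) = π.app (Opposite.op T) (h ≫ t) :=
    (ConcreteCategory.congr_hom (NatTrans.congr_app ht (Opposite.op T)) h).symm
  rw [← map_eq_zero_iff _ (app_injective φ _), hφ, hπ.2]
  constructor
  · rintro ⟨k, hk⟩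
    exact ⟨sq.lift k h hk, sq.lift_snd _ _ _⟩
  · rintro ⟨k, rfl⟩
    exact ⟨k ≫ p, by rw [Category.assoc, sq.w, Category.assoc]⟩

variable [HasBinaryBiproducts D]

lemma biprod_desc {B B' Z : D} {d : B ⟶ Z} {π : preadditiveYoneda.obj Z ⟶ F}
    (hπ : IsPresentation d π) (s : B' ⟶ B) : IsPresentation (biprod.desc (s ≫ d) d) π := by
  rw [isPresentation_iff] at hπ ⊢
  refine ⟨hπ.1, fun T h => (hπ.2 T h).trans ⟨?_, ?_⟩⟩
  · rintro ⟨k, rfl⟩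
    exact ⟨k ≫ biprod.inr, by rw [Category.assoc, biprod.inr_desc]⟩
  · rintro ⟨k, rfl⟩
    refine ⟨k ≫ biprod.desc s (𝟙 B), ?_⟩
    rw [Category.assoc]
    congr 1
    apply biprod.hom_ext' <;> simp

lemma biprod_map {B₁ Z₁ B₂ Z₂ : D} {d₁ : B₁ ⟶ Z₁} {d₂ : B₂ ⟶ Z₂}
    {π₁ : preadditiveYoneda.obj Z₁ ⟶ F} {π₂ : preadditiveYoneda.obj Z₂ ⟶ G}
    (hπ₁ : IsPresentation d₁ π₁) (hπ₂ : IsPresentation d₂ π₂) :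
    IsPresentation (biprod.map d₁ d₂)
      ((preadditiveYoneda.mapBiprod Z₁ Z₂).hom ≫ biprod.map π₁ π₂) := by
  obtain ⟨w₁, ⟨hc₁⟩⟩ := hπ₁
  obtain ⟨w₂, ⟨hc₂⟩⟩ := hπ₂
  have w : biprod.map (preadditiveYoneda.map d₁) (preadditiveYoneda.map d₂) ≫
      biprod.map π₁ π₂ = 0 := by
    apply biprod.hom_ext' <;> simp [reassoc_of% w₁, reassoc_of% w₂]
  obtain ⟨hc⟩ := nonempty_isColimit_cokernelCofork_biprod_map hc₁ hc₂ w
  exact ⟨_, ⟨CokernelCofork.isColimitOfIsColimitOfIff hc _ (preadditiveYoneda.mapBiprod Z₁ Z₂)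
    fun _ φ => by
      rw [reassoc_of% mapBiprod_hom_naturality preadditiveYoneda d₁ d₂]
      exact (Preadditive.IsIso.comp_left_eq_zero _ _).symm⟩⟩

end IsPresentation

end Presentation

section FinitelyPresented

variable {D : Type u} [SmallCategory D] [Preadditive D] {F : Dᵒᵖ ⥤ AddCommGrpCat.{u}}

lemma FinitelyPresented.finitelyGenerated (h : FinitelyPresented F) : FinitelyGenerated F := by
  obtain ⟨X, Y, f, ⟨e⟩⟩ := h
  exact ⟨Y, cokernel.π f ≫ e.inv, inferInstance⟩

lemma finitelyPresented_iff_exists_isPresentation :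
    FinitelyPresented F ↔
      ∃ (B Z : D) (d : B ⟶ Z) (π : preadditiveYoneda.obj Z ⟶ F), IsPresentation d π := by
  simp only [exists_isPresentation_iff]
  exact exists_congr fun B => exists_congr fun Z => preadditiveYoneda.map_surjective.exists

end FinitelyPresented

section Defect

variable {F G : Cᵒᵖ ⥤ AddCommGrpCat.{u}} {𝒲 : WeaklyExactStructure C}

lemma isDefect_iff_exists_isPresentation :
    IsDefect 𝒲 F ↔ ∃ (B Z : C) (d : B ⟶ Z) (π : preadditiveYoneda.obj Z ⟶ F),
      AdmissibleEpic 𝒲 d ∧ IsPresentation d π := by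
  simp only [exists_and_left, exists_isPresentation_iff]
  constructor
  · rintro ⟨A, B, Z, i, d, h, e⟩
    exact ⟨B, Z, d, ⟨A, i, h⟩, e⟩
  · rintro ⟨B, Z, d, ⟨A, i, h⟩, e⟩
    exact ⟨A, B, Z, i, d, h, e⟩

lemma IsPresentation.weaklyEffaceable {B Z : C} {d : B ⟶ Z}
    {π : preadditiveYoneda.obj Z ⟶ F} (hπ : IsPresentation d π) (hd : AdmissibleEpic 𝒲 d) :
    WeaklyEffaceable 𝒲 F := by
  obtain ⟨hepi, hker⟩ := isPresentation_iff.1 hπ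
  obtain ⟨A, i, h⟩ := hd
  intro T z
  obtain ⟨t : T ⟶ Z, rfl⟩ := app_surjective π _ z
  obtain ⟨P, p, q, sq, hq⟩ := 𝒲.pullback_mem h t
  exact ⟨P, q, hq, (app_comp_eq_map_app π q t).symm.trans ((hker P _).2 ⟨p, sq.w⟩)⟩

lemma WeaklyEffaceable.of_epi (hF : WeaklyEffaceable 𝒲 F) (φ : F ⟶ G) [Epi φ] :
    WeaklyEffaceable 𝒲 G := by
  intro T z
  obtain ⟨x, rfl⟩ := app_surjective φ _ z
  obtain ⟨Y, g, hg, hx⟩ := hF T x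
  refine ⟨Y, g, hg, ?_⟩
  rw [← NatTrans.naturality_apply, hx, map_zero]

lemma WeaklyEffaceable.isDefect (hF : WeaklyEffaceable 𝒲 F) (hfp : FinitelyPresented F) :
    IsDefect 𝒲 F := by
  obtain ⟨B, Z, d, π, hπ⟩ := finitelyPresented_iff_exists_isPresentation.1 hfp
  obtain ⟨Y, g, hg, hgπ⟩ := hF Z (π.app (Opposite.op Z) (𝟙 Z))
  rw [← app_comp_eq_map_app, Category.comp_id] at hgπ
  obtain ⟨s, rfl⟩ := ((isPresentation_iff.1 hπ).2 Y g).1 hgπ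
  exact isDefect_iff_exists_isPresentation.2
    ⟨_, _, _, π, hg.biprod_desc d, hπ.biprod_desc s⟩

namespace IsDefect

lemma weaklyEffaceable (hF : IsDefect 𝒲 F) : WeaklyEffaceable 𝒲 F := by
  obtain ⟨B, Z, d, π, hd, hπ⟩ := isDefect_iff_exists_isPresentation.1 hF
  exact hπ.weaklyEffaceable hd

lemma finitelyPresented (hF : IsDefect 𝒲 F) : FinitelyPresented F := by
  obtain ⟨A, B, Z, i, d, -, e⟩ := hF
  exact ⟨B, Z, preadditiveYoneda.map d, e⟩

lemma of_mono (hF : IsDefect 𝒲 F) (φ : G ⟶ F) [Mono φ] (hG : FinitelyGenerated G) :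
    IsDefect 𝒲 G := by
  obtain ⟨B, Z, d, π, ⟨A, i, h⟩, hπ⟩ := isDefect_iff_exists_isPresentation.1 hF
  obtain ⟨X, ρ, hρ⟩ := hG
  have : Epi π := (isPresentation_iff.1 hπ).1
  obtain ⟨t, ht⟩ := exists_preadditiveYoneda_map_comp_eq π (ρ ≫ φ)
  obtain ⟨P, p, q, sq, hq⟩ := 𝒲.pullback_mem h t
  exact isDefect_iff_exists_isPresentation.2 ⟨P, X, q, ρ, hq, hπ.of_mono φ ρ ht sq⟩

lemma coherent (hF : IsDefect 𝒲 F) : Coherent F :=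
  ⟨hF.finitelyPresented, fun _ φ _ hG => (hF.of_mono φ hG).finitelyPresented⟩

lemma biprod (hF : IsDefect 𝒲 F) (hG : IsDefect 𝒲 G) : IsDefect 𝒲 (F ⊞ G) := by
  obtain ⟨B₁, Z₁, d₁, π₁, ⟨A₁, i₁, h₁⟩, hπ₁⟩ := isDefect_iff_exists_isPresentation.1 hF
  obtain ⟨B₂, Z₂, d₂, π₂, ⟨A₂, i₂, h₂⟩, hπ₂⟩ := isDefect_iff_exists_isPresentation.1 hG
  exact isDefect_iff_exists_isPresentation.2
    ⟨_, _, _, _, ⟨_, _, 𝒲.sum_mem h₁ h₂⟩, hπ₁.biprod_map hπ₂⟩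

end IsDefect

end Defect

theorem statement17_general (𝒲 : WeaklyExactStructure C) :
    (∀ F : Cᵒᵖ ⥤ AddCommGrpCat.{u},
      IsDefect 𝒲 F ↔ (WeaklyEffaceable 𝒲 F ∧ FinitelyPresented F)) ∧
    (∀ F : Cᵒᵖ ⥤ AddCommGrpCat.{u}, IsDefect 𝒲 F → Coherent F) ∧
    (∀ F G : Cᵒᵖ ⥤ AddCommGrpCat.{u}, IsDefect 𝒲 F → IsDefect 𝒲 G → IsDefect 𝒲 (F ⊞ G)) ∧
    (∀ (F G : Cᵒᵖ ⥤ AddCommGrpCat.{u}) (φ : G ⟶ F), Mono φ → IsDefect 𝒲 F →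
      FinitelyGenerated G → IsDefect 𝒲 G) ∧
    (∀ (F G : Cᵒᵖ ⥤ AddCommGrpCat.{u}) (φ : F ⟶ G), Epi φ → IsDefect 𝒲 F →
      FinitelyPresented G → IsDefect 𝒲 G) :=
  ⟨fun _ => ⟨fun hF => ⟨hF.weaklyEffaceable, hF.finitelyPresented⟩, fun h => h.1.isDefect h.2⟩,
    fun _ hF => hF.coherent,
    fun _ _ hF hG => hF.biprod hG,
    fun _ _ φ _ hF hG => hF.of_mono φ hG,
    fun _ _ φ _ hF hG => (hF.weaklyEffaceable.of_epi φ).isDefect hG⟩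

/-- A module is a defect of `𝒲` iff it is weakly effaceable and coherent; moreover the
defects form a topologizing subcategory of the coherent modules: they are closed under
finite direct sums and under subquotients taken among coherent functors. -/
theorem statement17 (𝒲 : WeaklyExactStructure C) :
    (∀ F : Cᵒᵖ ⥤ AddCommGrpCat.{u}, F.Additive →
      (IsDefect 𝒲 F ↔ (WeaklyEffaceable 𝒲 F ∧ Coherent F))) ∧
    (∀ F G : Cᵒᵖ ⥤ AddCommGrpCat.{u}, IsDefect 𝒲 F → IsDefect 𝒲 G → IsDefect 𝒲 (F ⊞ G)) ∧
    (∀ (F G : Cᵒᵖ ⥤ AddCommGrpCat.{u}) (φ : G ⟶ F), Mono φ → IsDefect 𝒲 F → Coherent G →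
      IsDefect 𝒲 G) ∧
    (∀ (F G : Cᵒᵖ ⥤ AddCommGrpCat.{u}) (φ : F ⟶ G), Epi φ → IsDefect 𝒲 F → Coherent G →
      IsDefect 𝒲 G) := by
  obtain ⟨iff, coherent, biprod, of_mono, of_epi⟩ := statement17_general 𝒲
  exact ⟨fun F _ => ⟨fun hF => ⟨((iff F).1 hF).1, coherent F hF⟩, fun h => (iff F).2 ⟨h.1, h.2.1⟩⟩,
    biprod, fun F G φ hφ hF hG => of_mono F G φ hφ hF hG.1.finitelyGenerated,
    fun F G φ hφ hF hG => of_epi F G φ hφ hF hG.1⟩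

end Statement

end WeaklyExactPaper
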